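/- Let K be a φ-pseudo field, A ∈ GL_n(K), and let R₁ and R₂ be two PV rings for φ(y) = A y over K, i.e., each R_i is a K-φ-algebra which is φ-simple and contains Y_i ∈ GL_n(R_i) with φ applied entrywise to Y_i equal to (the image of) A times Y_i, and R_i is generated as a K-algebra by the entries of Y_i together with (det Y_i)^{-1}. Set k := K^φ and k_i := R_i^φ (which are fields, with k_i algebraic over k). Then there exists a field k̃ which is a finite extension of k, together with k-algebra embeddings of k₁ and k₂ into k̃, and a ring isomorphism ψ : R₁ ⊗_{k₁} k̃ → R₂ ⊗_{k₂} k̃ that commutes with the endomorphisms φ ⊗ id on both sides and is compatible with the K ⊗_k k̃-algebra structures. -/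

import Mathlib

open scoped TensorProduct

/-- A `φ`-ring `R` is `φ`-simple if the zero ideal and the whole ring are its only
`φ`-ideals (ideals `I` with `φ(I) ⊆ I`). -/
def DiffSimple {R : Type*} [CommRing R] (φ : R →+* R) : Prop :=
  (⊥ : Ideal R) ≠ ⊤ ∧ ∀ I : Ideal R, (∀ x ∈ I, φ x ∈ I) → I = ⊥ ∨ I = ⊤

/-- A `φ`-pseudo field is a `φ`-simple Noetherian `φ`-ring in which every
non-zero-divisor is a unit. -/
def PseudoField (R : Type*) [CommRing R] (φ : R →+* R) : Prop :=
  DiffSimple φ ∧ IsNoetherianRing R ∧ ∀ x ∈ nonZeroDivisors R, IsUnit x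

/-- The subring of `φ`-constants of a ring with endomorphism `φ`. -/
def constSubring {R : Type*} [CommRing R] (φ : R →+* R) : Subring R :=
  RingHom.eqLocus φ (RingHom.id R)

theorem mem_constSubring {R : Type*} [CommRing R] (φ : R →+* R) (x : R) :
    x ∈ constSubring φ ↔ φ x = x := Iff.rfl

open Polynomial in
/-- Only finitely many points of `Spec F[X]` are missed by a dominant morphism of finite type from
an integral scheme, so some nonzero polynomial over a subfield `k` does not become a unit. -/
theorem Polynomial.exists_not_isUnit_algebraMap_of_finiteType {k F D : Type*} [Field k] [Field F]
    [CommRing D] [IsDomain D] [Algebra k F] [Algebra F[X] D] [Algebra.FiniteType F[X] D]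
    (h : Function.Injective (algebraMap F[X] D)) :
    ∃ p : k[X], p ≠ 0 ∧ ¬ IsUnit (algebraMap F[X] D (p.map (algebraMap k F))) := by
  classical
  have : FaithfulSMul F[X] D := (faithfulSMul_iff_algebraMap_injective _ _).2 h
  have : Algebra.FinitePresentation F[X] D := Algebra.FinitePresentation.of_finiteType.1 ‹_›
  have hopen : IsOpen (Set.range (PrimeSpectrum.comap (algebraMap F[X] D))) :=
    (PrimeSpectrum.isOpenMap_comap_of_hasGoingDown_of_finitePresentation).isOpen_range
  have hbot : (⊥ : PrimeSpectrum F[X]) ∈ Set.range (PrimeSpectrum.comap (algebraMap F[X] D)) := by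
    refine ⟨⊥, PrimeSpectrum.ext ?_⟩
    simp
  obtain ⟨_, ⟨g, rfl⟩, hg0, hg⟩ :=
    PrimeSpectrum.isTopologicalBasis_basic_opens.exists_subset_of_mem_open hbot hopen
  have hg0 : g ≠ 0 := by simpa using hg0
  let E := AlgebraicClosure F
  let Z : Finset E := (g.aroots E).toFinset.filter fun z => IsIntegral k z
  let m : k[X] := ∏ z ∈ Z, minpoly k z
  have hm : m.Monic := monic_prod_of_monic _ _ fun z hz => minpoly.monic (Finset.mem_filter.1 hz).2
  let p : k[X] := X * m + C 1
  have hdeg : p.natDegree ≠ 0 := by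
    rw [natDegree_add_C, natDegree_X_mul hm.ne_zero]
    omega
  have hp0 : p ≠ 0 := fun h => hdeg (by rw [h, natDegree_zero])
  refine ⟨p, hp0, fun hu => ?_⟩
  obtain ⟨z, hz⟩ := IsAlgClosed.exists_aeval_eq_zero E p
    (fun h => hdeg (natDegree_eq_of_degree_eq_some h))
  let q : PrimeSpectrum F[X] := ⟨RingHom.ker (aeval z : F[X] →ₐ[F] E), RingHom.ker_isPrime _⟩
  have hpq : p.map (algebraMap k F) ∈ q.asIdeal := by
    rw [RingHom.mem_ker, aeval_map_algebraMap]
    exact hz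
  have hgz : aeval z g = 0 := by
    by_contra hgz
    obtain ⟨P, hP⟩ := hg (show q ∈ _ from hgz)
    refine P.isPrime.ne_top (Ideal.eq_top_of_isUnit_mem _ ?_ hu)
    rw [← hP] at hpq
    exact hpq
  have hzi : IsIntegral k z := isAlgebraic_iff_isIntegral.1 ⟨p, hp0, hz⟩
  have hmz : aeval z m = 0 := by
    rw [map_prod]
    exact Finset.prod_eq_zero (i := z)
      (Finset.mem_filter.2 ⟨by simp [hg0, hgz], hzi⟩) (minpoly.aeval k z)
  simp [p, hmz] at hz

open Polynomial in
/-- A subfield of an integral domain of finite type over a field `F` is algebraic over `F`,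
provided it shares a subfield with `F`. -/
theorem isAlgebraic_algebraMap_of_finiteType {k l F D : Type*} [Field k] [Field l] [Field F]
    [CommRing D] [IsDomain D] [Algebra k l] [Algebra k F] [Algebra k D] [Algebra l D]
    [Algebra F D] [IsScalarTower k l D] [IsScalarTower k F D] [Algebra.FiniteType F D] (a : l) :
    IsAlgebraic F (algebraMap l D a) := by
  by_contra hx
  set x := algebraMap l D a with hxdef
  let _ : Algebra F[X] D := (aeval x : F[X] →ₐ[F] D).toAlgebra
  have : IsScalarTower F F[X] D := IsScalarTower.of_algebraMap_eq' (by
    ext r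
    simp [RingHom.algebraMap_toAlgebra])
  have : Algebra.FiniteType F[X] D := Algebra.FiniteType.of_restrictScalars_finiteType F _ _
  obtain ⟨p, hp0, hp⟩ := exists_not_isUnit_algebraMap_of_finiteType (k := k) (F := F) (D := D)
    (transcendental_iff_injective.1 hx)
  have hval : algebraMap F[X] D (p.map (algebraMap k F)) = algebraMap l D (aeval a p) := by
    rw [← aeval_algebraMap_apply, ← hxdef]
    exact aeval_map_algebraMap F x p
  rw [hval] at hp
  have h0 : aeval a p = 0 := by
    by_contra h0
    exact hp ((IsUnit.mk0 _ h0).map _)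
  apply hx
  refine ⟨p.map (algebraMap k F), (Polynomial.map_ne_zero_iff (algebraMap k F).injective).2 hp0, ?_⟩
  rw [aeval_map_algebraMap, hxdef, aeval_algebraMap_apply, h0, map_zero]

/-- A Noetherian total ring of fractions which is reduced is Artinian. -/
theorem isArtinianRing_of_forall_nonZeroDivisors_isUnit {K : Type*} [CommRing K] [IsReduced K]
    [IsNoetherianRing K] (hK : ∀ x ∈ nonZeroDivisors K, IsUnit x) : IsArtinianRing K := by
  refine isArtinianRing_iff_isNoetherianRing_krullDimLE_zero.2 ⟨inferInstance, ?_⟩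
  rw [Ring.krullDimLE_zero_iff]
  intro p hp
  obtain ⟨M, hM, hpM⟩ := p.exists_le_maximal hp.ne_top
  have hfin := minimalPrimes.finite_of_isNoetherianRing K
  have hsub : (M : Set K) ⊆ ⋃ i ∈ (hfin.toFinset : Set (Ideal K)), ((id i : Ideal K) : Set K) := by
    intro x hx
    by_contra hxm
    simp only [Set.Finite.coe_toFinset, id, Set.mem_iUnion, SetLike.mem_coe, not_exists] at hxm
    refine hM.ne_top (Ideal.eq_top_of_isUnit_mem _ hx (hK x ?_))
    rw [mem_nonZeroDivisors_iff_right]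
    intro y hy
    refine IsReduced.eq_zero y ?_
    rw [← mem_nilradical, nilradical, ← Ideal.sInf_minimalPrimes, Ideal.mem_sInf]
    intro q hq
    have : q.IsPrime := hq.1.1
    exact (this.mem_or_mem (hy ▸ q.zero_mem : y * x ∈ q)).resolve_right (hxm q hq)
  obtain ⟨q, hq, hMq⟩ := (Ideal.subset_union_prime ⊥ ⊥ fun i hi _ _ =>
    (show i.IsPrime from (hfin.mem_toFinset.1 hi).1.1)).1 hsub
  have hq := hfin.mem_toFinset.1 hq
  have hpq : M ≤ p := hMq.trans (hq.2 ⟨hp, bot_le⟩ (hpM.trans hMq))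
  exact (le_antisymm hpM hpq) ▸ hM

/-- The subfield `l` of an integral domain of finite type over an Artinian ring `K` spans a
finite `K`-module, provided it shares a subfield with `K`. -/
theorem exists_fg_submodule_of_isDomain {k l K D : Type*} [Field k] [Field l] [CommRing K]
    [IsArtinianRing K] [CommRing D] [IsDomain D] [Algebra k l] [Algebra k K] [Algebra k D]
    [Algebra l D] [Algebra K D] [IsScalarTower k l D] [IsScalarTower k K D]
    [Algebra.FiniteType K D] :
    ∃ N : Submodule K D, N.FG ∧ ∀ a : l, algebraMap l D a ∈ N := by
  let p := RingHom.ker (algebraMap K D)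
  have : p.IsPrime := RingHom.ker_isPrime _
  let _ : Field (K ⧸ p) := Ideal.Quotient.field p
  let _ : Algebra (K ⧸ p) D := (RingHom.kerLift (algebraMap K D)).toAlgebra
  have : IsScalarTower K (K ⧸ p) D := IsScalarTower.of_algebraMap_eq fun _ => rfl
  have : IsScalarTower k (K ⧸ p) D := IsScalarTower.of_algebraMap_eq fun c => by
    rw [IsScalarTower.algebraMap_apply k K D, IsScalarTower.algebraMap_apply K (K ⧸ p) D]
    rfl
  have : Algebra.FiniteType (K ⧸ p) D := Algebra.FiniteType.of_restrictScalars_finiteType K _ _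
  let W := Algebra.adjoin (K ⧸ p) (Set.range (algebraMap l D))
  have hW : Algebra.IsIntegral (K ⧸ p) W := by
    refine Algebra.IsIntegral.adjoin ?_
    rintro _ ⟨a, rfl⟩
    exact (isAlgebraic_algebraMap_of_finiteType (k := k) a).isIntegral
  have hWf : IsField W := isField_of_isIntegral_of_isField' (Field.toIsField (K ⧸ p))
  obtain ⟨M, hM⟩ := Ideal.exists_maximal D
  let _ : Field (D ⧸ M) := Ideal.Quotient.field M
  have hfin : Module.Finite (K ⧸ p) (D ⧸ M) := finite_of_finite_type_of_isJacobsonRing _ _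
  let _ : Field W := hWf.toField
  let f : W →ₐ[K ⧸ p] (D ⧸ M) := (Ideal.Quotient.mkₐ (K ⧸ p) M).comp W.val
  have hWfin : Module.Finite (K ⧸ p) W :=
    Module.Finite.of_injective f.toLinearMap f.toRingHom.injective
  have : Module.Finite K W := Module.Finite.trans (K ⧸ p) W
  refine ⟨(Subalgebra.toSubmodule W).restrictScalars K, ?_, fun a =>
    Algebra.subset_adjoin ⟨a, rfl⟩⟩
  exact Module.Finite.iff_fg.1 this

/-- The subfield `l` of a reduced algebra of finite type over an Artinian ring `K` spans a
finite `K`-module, provided it shares a subfield with `K`. -/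
theorem exists_finite_submodule_of_isReduced {k l K S : Type*} [Field k] [Field l] [CommRing K]
    [IsArtinianRing K] [CommRing S] [IsReduced S] [Algebra k l] [Algebra k K] [Algebra k S]
    [Algebra l S] [Algebra K S] [IsScalarTower k l S] [IsScalarTower k K S]
    [Algebra.FiniteType K S] :
    ∃ N : Submodule K S, Module.Finite K N ∧ ∀ a : l, algebraMap l S a ∈ N := by
  have : IsNoetherianRing S := Algebra.FiniteType.isNoetherianRing K S
  have : Finite (minimalPrimes S) := minimalPrimes.finite_of_isNoetherianRing S
  have hprime (P : minimalPrimes S) : P.1.IsPrime := P.2.1.1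
  have hN (P : minimalPrimes S) := exists_fg_submodule_of_isDomain (k := k) (l := l) (K := K)
    (D := S ⧸ P.1)
  choose N hNfg hlN using hN
  have hfin (P) : Module.Finite K (N P) := Module.Finite.iff_fg.2 (hNfg P)
  let q (P : minimalPrimes S) : S →ₗ[K] S ⧸ P.1 := (Ideal.Quotient.mkₐ K P.1).toLinearMap
  let N' : Submodule K S := ⨅ P, (N P).comap (q P)
  have hmem (x : N') (P) : q P x ∈ N P := (Submodule.mem_iInf _).1 x.2 P
  let g : N' →ₗ[K] ∀ P, N P :=
    LinearMap.pi fun P => ((q P).comp N'.subtype).codRestrict (N P) fun x => hmem x P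
  refine ⟨N', Module.Finite.of_injective g ?_, fun a => (Submodule.mem_iInf _).2 fun P => hlN P a⟩
  rw [injective_iff_map_eq_zero]
  intro x hx
  refine Subtype.ext (IsReduced.eq_zero (x : S) ?_)
  rw [← mem_nilradical, nilradical, ← Ideal.sInf_minimalPrimes, Ideal.mem_sInf]
  intro P hP
  exact Ideal.Quotient.eq_zero_iff_mem.1 (congrArg Subtype.val (congrFun hx ⟨P, hP⟩))

section DiffSimple

variable {R S : Type*} [CommRing R] [CommRing S] {φ : R →+* R} {σ : S →+* S}

theorem DiffSimple.nontrivial (h : DiffSimple φ) : Nontrivial R :=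
  (Submodule.nontrivial_iff R).1 ⟨⊥, ⊤, h.1⟩

theorem DiffSimple.isReduced (h : DiffSimple φ) : IsReduced R := by
  have := h.nontrivial
  rw [← nilradical_eq_bot_iff]
  exact (h.2 (nilradical R) fun x hx => IsNilpotent.map hx φ).resolve_right fun ht =>
    not_isNilpotent_one (mem_nilradical.1 (ht ▸ Submodule.mem_top : (1 : R) ∈ nilradical R))

theorem DiffSimple.injective [Nontrivial S] (h : DiffSimple φ) (f : R →+* S)
    (hf : ∀ r, f (φ r) = σ (f r)) : Function.Injective f := by
  rw [RingHom.injective_iff_ker_eq_bot]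
  refine (h.2 _ fun x hx => ?_).resolve_right (RingHom.ker_ne_top f)
  rw [RingHom.mem_ker] at hx ⊢
  rw [hf, hx, map_zero]

theorem DiffSimple.isField_constSubring (h : DiffSimple φ) : IsField (constSubring φ) := by
  have := h.nontrivial
  refine ⟨⟨0, 1, zero_ne_one⟩, mul_comm, fun {a} ha => ?_⟩
  have ha0 : (a : R) ≠ 0 := fun h => ha (Subtype.ext h)
  have hφa : φ a = a := a.2
  have htop := (h.2 (Ideal.span {(a : R)}) fun x hx => by
    obtain ⟨y, rfl⟩ := Ideal.mem_span_singleton'.1 hx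
    rw [map_mul, hφa]
    exact Ideal.mem_span_singleton'.2 ⟨_, rfl⟩).resolve_left (by simpa using ha0)
  obtain ⟨b, hb⟩ := (Ideal.span_singleton_eq_top.1 htop).exists_right_inv
  have hφb : φ b = b := by
    have h1 := congrArg φ hb
    rw [map_mul, hφa, map_one] at h1
    calc φ b = b * a * φ b := by rw [mul_comm b, hb, one_mul]
      _ = b := by rw [mul_assoc, h1, mul_one]
  exact ⟨⟨b, hφb⟩, Subtype.ext hb⟩

/-- Constants that are linearly independent over the constants of a `φ`-simple ring `R` are
linearly independent over `R`. -/
theorem DiffSimple.linearIndependent [Algebra R S] {k ι : Type*} [CommRing k] [Algebra k R]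
    [Module k S] [IsScalarTower k R S] (h : DiffSimple φ)
    (hσ : ∀ r, σ (algebraMap R S r) = algebraMap R S (φ r))
    (hk : ∀ r, φ r = r → ∃ c : k, algebraMap k R c = r) {v : ι → S} (hv : ∀ i, σ (v i) = v i)
    (hli : LinearIndependent k v) : LinearIndependent R v := by
  classical
  have := h.nontrivial
  have hσs (s : Finset ι) (r : ι → R) :
      σ (∑ i ∈ s, r i • v i) = ∑ i ∈ s, φ (r i) • v i := by
    simp [Algebra.smul_def, hσ, hv]
  rw [linearIndependent_iff']
  intro s
  induction s using Finset.induction_on with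
  | empty => simp
  | insert j s hj ih =>
    let I : Ideal R :=
      { carrier := {x | ∃ r : ι → R, r j = x ∧ ∑ i ∈ insert j s, r i • v i = 0}
        zero_mem' := ⟨0, rfl, by simp⟩
        add_mem' := by
          rintro _ _ ⟨r, rfl, hr⟩ ⟨t, rfl, ht⟩
          exact ⟨r + t, rfl, by simp [add_smul, Finset.sum_add_distrib, -Finset.sum_insert, hr, ht]⟩
        smul_mem' := by
          rintro c _ ⟨r, rfl, hr⟩
          exact ⟨c • r, rfl, by simp [mul_smul, ← Finset.smul_sum, -Finset.sum_insert, hr]⟩ }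
    have hI : I = ⊥ := by
      refine (h.2 I ?_).resolve_right fun htop => ?_
      · rintro _ ⟨r, rfl, hr⟩
        exact ⟨fun i => φ (r i), rfl, by rw [← hσs, hr, map_zero]⟩
      · obtain ⟨r, hrj, hr⟩ : (1 : R) ∈ I := htop ▸ Submodule.mem_top
        have hdiff : ∑ i ∈ s, (φ (r i) - r i) • v i = 0 := by
          have h1 : ∑ i ∈ insert j s, (φ (r i) - r i) • v i = 0 := by
            simp only [sub_smul, Finset.sum_sub_distrib]
            rw [← hσs, hr, map_zero, sub_zero]
          rwa [Finset.sum_insert hj, hrj, map_one, sub_self, zero_smul, zero_add] at h1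
        have hconst : ∀ i ∈ insert j s, φ (r i) = r i := by
          intro i hi
          rcases Finset.mem_insert.1 hi with rfl | hi
          · rw [hrj, map_one]
          · exact sub_eq_zero.1 (ih _ hdiff i hi)
        choose! c hc using fun i hi => hk (r i) (hconst i hi)
        have hsum : ∑ i ∈ insert j s, c i • v i = 0 := by
          rw [← hr]
          exact Finset.sum_congr rfl fun i hi => by rw [← hc i hi, algebraMap_smul]
        have hcj := linearIndependent_iff'.1 hli _ c hsum j (Finset.mem_insert_self _ _)
        have := hc j (Finset.mem_insert_self _ _)
        rw [hcj, map_zero, hrj] at this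
        exact zero_ne_one this
    intro r hr
    have hrj : r j = 0 := by
      have : r j ∈ I := ⟨r, rfl, hr⟩
      rwa [hI, Ideal.mem_bot] at this
    rw [Finset.sum_insert hj, hrj, zero_smul, zero_add] at hr
    intro i hi
    rcases Finset.mem_insert.1 hi with rfl | hi
    · exact hrj
    · exact ih r hr i hi

end DiffSimple

open scoped TensorProduct in
/-- Two ring homomorphisms which agree on `K` induce one on the tensor product. -/
theorem TensorProduct.exists_ringHom_tmul {K A B T : Type*} [CommRing K] [CommRing A] [CommRing B]
    [CommRing T] [Algebra K A] [Algebra K B] (f : A →+* T) (g : B →+* T)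
    (h : ∀ x, f (algebraMap K A x) = g (algebraMap K B x)) :
    ∃ F : A ⊗[K] B →+* T, ∀ a b, F (a ⊗ₜ b) = f a * g b := by
  let _ : Algebra K T := (f.comp (algebraMap K A)).toAlgebra
  let f' : A →ₐ[K] T := { f with commutes' := fun _ => rfl }
  let g' : B →ₐ[K] T := { g with commutes' := fun x => (h x).symm }
  exact ⟨(Algebra.TensorProduct.lift f' g' fun _ _ => Commute.all _ _).toRingHom, fun a b =>
    Algebra.TensorProduct.lift_tmul f' g' _ a b⟩

open scoped TensorProduct in
theorem TensorProduct.exists_endomorphism_tmul {k A l : Type*} [CommRing k] [CommRing A]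
    [CommRing l] [Algebra k A] [Algebra k l] (φ : A →+* A)
    (h : ∀ x, φ (algebraMap k A x) = algebraMap k A x) :
    ∃ Φ : A ⊗[k] l →+* A ⊗[k] l, ∀ a c, Φ (a ⊗ₜ c) = φ a ⊗ₜ c := by
  obtain ⟨Φ, hΦ⟩ := TensorProduct.exists_ringHom_tmul (K := k)
    ((Algebra.TensorProduct.includeLeftRingHom : A →+* A ⊗[k] l).comp φ)
    (Algebra.TensorProduct.includeRight : l →ₐ[k] A ⊗[k] l).toRingHom fun x => by
      simp [h, Algebra.TensorProduct.tmul_one_eq_one_tmul]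
  exact ⟨Φ, fun a c => by simp [hΦ]⟩

section Solutions

variable {n : ℕ} {S : Type*} [CommRing S] (σ : S →+* S) {A Y₁ Y₂ : Matrix (Fin n) (Fin n) S}
  {w₁ w₂ : S}

/-- A subring which contains the constants and an invertible solution matrix of `σ(y) = Ay`
contains every other invertible solution matrix. -/
theorem solution_mem_of_constSubring_le (hA : IsUnit A.det) (hw₁ : Y₁.det * w₁ = 1)
    (hw₂ : Y₂.det * w₂ = 1) (hY₁ : Y₁.map σ = A * Y₁) (hY₂ : Y₂.map σ = A * Y₂) (T : Subring S)
    (hT : constSubring σ ≤ T) (hTY : ∀ i j, Y₁ i j ∈ T) (hTw : w₁ ∈ T) :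
    w₂ ∈ T ∧ ∀ i j, Y₂ i j ∈ T := by
  have hAu : IsUnit A := (Matrix.isUnit_iff_isUnit_det A).2 hA
  have hYu : IsUnit Y₁ := (Matrix.isUnit_iff_isUnit_det Y₁).2 (IsUnit.of_mul_eq_one _ hw₁)
  have hdet {Y : Matrix (Fin n) (Fin n) S} (hY : Y.map σ = A * Y) : σ Y.det = A.det * Y.det := by
    rw [← Matrix.det_mul, ← hY, RingHom.map_det]
    rfl
  let Z := w₁ • Y₁.adjugate * Y₂
  have hYZ : Y₁ * Z = Y₂ := by
    simp only [Z]
    rw [← mul_assoc, Matrix.mul_smul, Matrix.mul_adjugate, smul_smul, mul_comm w₁, hw₁, one_smul,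
      one_mul]
  have hZ : Z.map σ = Z := by
    have h1 : (Y₁ * Z).map σ = A * Y₂ := by rw [hYZ, hY₂]
    rw [Matrix.map_mul, hY₁, ← hYZ, ← mul_assoc] at h1
    exact (hAu.mul hYu).mul_left_cancel h1
  have hc : σ (Y₁.det * w₂) = Y₁.det * w₂ := by
    have h1 := congrArg σ hw₂
    rw [map_mul, map_one, hdet hY₂] at h1
    rw [map_mul, hdet hY₁]
    linear_combination (A.det * Y₁.det * σ w₂) * (-hw₂) + Y₁.det * w₂ * h1
  constructor
  · have h1 : w₂ = w₁ * (Y₁.det * w₂) := by linear_combination (-w₂) * hw₁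
    rw [h1]
    exact T.mul_mem hTw (hT hc)
  · intro i j
    rw [← hYZ, Matrix.mul_apply]
    exact T.sum_mem fun m _ => T.mul_mem (hTY i m) (hT (congrFun (congrFun hZ m) j))

end Solutions

section PicardVessiot

open scoped TensorProduct

theorem DiffSimple.injective_of_tmul {R S k l : Type*} [CommRing R] [CommRing S] [CommRing k]
    [CommRing l] [Algebra R S] [Algebra k R] [Algebra k l] [Module.Free k l] {φ : R →+* R}
    {σ : S →+* S} (h : DiffSimple φ) (hσ : ∀ r, σ (algebraMap R S r) = algebraMap R S (φ r))
    (hk : ∀ r, φ r = r → ∃ c : k, algebraMap k R c = r) (j : l →+* S)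
    (hj : Function.Injective j) (hjσ : ∀ c, σ (j c) = j c)
    (hkl : ∀ c : k, j (algebraMap k l c) = algebraMap R S (algebraMap k R c))
    (F : R ⊗[k] l →+* S) (hF : ∀ r c, F (r ⊗ₜ c) = algebraMap R S r * j c) :
    Function.Injective F := by
  let _ : Algebra k S := ((algebraMap R S).comp (algebraMap k R)).toAlgebra
  have : IsScalarTower k R S := IsScalarTower.of_algebraMap_eq fun _ => rfl
  let b := Module.Free.chooseBasis k l
  let j' : l →ₐ[k] S := { j with commutes' := hkl }
  have hli : LinearIndependent R fun i => j (b i) :=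
    h.linearIndependent hσ hk (fun i => hjσ _)
      (b.linearIndependent.map' j'.toLinearMap (LinearMap.ker_eq_bot.2 hj))
  let B := Algebra.TensorProduct.basis R b
  let F' : R ⊗[k] l →ₐ[R] S := { F with
    commutes' := fun r => by
      simpa using hF r 1 }
  have hFB : F'.toLinearMap = (Finsupp.linearCombination R fun i => j (b i)).comp
      B.repr.toLinearMap := by
    refine B.ext fun i => ?_
    have : F (1 ⊗ₜ b i) = j (b i) := by rw [hF, map_one, one_mul]
    simpa [B, F'] using this
  have hinj : Function.Injective F'.toLinearMap := by
    rw [hFB, LinearMap.coe_comp]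
    exact (linearIndependent_iff_injective_finsuppLinearCombination.1 hli).comp
      B.repr.injective
  exact hinj

/-- The constants of a `φ`-simple algebra of finite type over an Artinian `φ`-simple ring form a
finite extension of the constants of the base. -/
theorem DiffSimple.finite_of_finiteType {k l K S : Type*} [Field k] [Field l] [CommRing K]
    [CommRing S] [IsArtinianRing K] [Algebra k l] [Algebra k K] [Algebra K S] [Algebra l S]
    [Algebra.FiniteType K S] {φ : K →+* K} {σ : S →+* S} (hφ : DiffSimple φ) (hS : DiffSimple σ)
    (hσ : ∀ r, σ (algebraMap K S r) = algebraMap K S (φ r))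
    (hk : ∀ r, φ r = r → ∃ c : k, algebraMap k K c = r)
    (hl : ∀ c, σ (algebraMap l S c) = algebraMap l S c)
    (hkl : ∀ c : k, algebraMap l S (algebraMap k l c) = algebraMap K S (algebraMap k K c)) :
    Module.Finite k l := by
  have := hφ.nontrivial
  have := hS.nontrivial
  have := hS.isReduced
  let _ : Algebra k S := ((algebraMap K S).comp (algebraMap k K)).toAlgebra
  have : IsScalarTower k K S := IsScalarTower.of_algebraMap_eq fun _ => rfl
  have : IsScalarTower k l S := IsScalarTower.of_algebraMap_eq fun c => (hkl c).symm
  obtain ⟨N, hN, hlN⟩ := exists_finite_submodule_of_isReduced (k := k) (l := l) (K := K) (S := S)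
  let b := Module.Free.chooseBasis k l
  have hli : LinearIndependent K fun i => algebraMap l S (b i) :=
    hφ.linearIndependent hσ hk (fun i => hl _)
      (b.linearIndependent.map' (IsScalarTower.toAlgHom k l S).toLinearMap
        (LinearMap.ker_eq_bot.2 (algebraMap l S).injective))
  have hli' : LinearIndependent K fun i => (⟨algebraMap l S (b i), hlN _⟩ : N) :=
    LinearIndependent.of_comp N.subtype hli
  have : Finite (Module.Free.ChooseBasisIndex k l) := hli'.finite_of_isNoetherian
  exact Module.Finite.of_basis b

/-- Two `φ`-simple algebras have a common `φ`-simple overring generated by both of them. -/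
theorem exists_diffSimple_of_flat {K R₁ R₂ : Type u} [CommRing K] [CommRing R₁] [CommRing R₂]
    [IsNoetherianRing K] [Algebra K R₁] [Algebra K R₂] [Algebra.FiniteType K R₁]
    [Algebra.FiniteType K R₂] [Nontrivial R₁] [Module.Flat K R₁]
    (hinj : Function.Injective (algebraMap K R₂))
    {φ : K →+* K} (φ₁ : R₁ →+* R₁) (φ₂ : R₂ →+* R₂)
    (h₁ : ∀ a : K, φ₁ (algebraMap K R₁ a) = algebraMap K R₁ (φ a))
    (h₂ : ∀ a : K, φ₂ (algebraMap K R₂ a) = algebraMap K R₂ (φ a)) :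
    ∃ (S : Type u) (_ : CommRing S) (_ : Algebra K S) (σ : S →+* S) (f₁ : R₁ →ₐ[K] S)
      (f₂ : R₂ →ₐ[K] S), DiffSimple σ ∧ Algebra.FiniteType K S ∧
      (∀ r, σ (f₁ r) = f₁ (φ₁ r)) ∧ (∀ r, σ (f₂ r) = f₂ (φ₂ r)) ∧
      ∀ T : Subring S, (∀ r, f₁ r ∈ T) → (∀ r, f₂ r ∈ T) → T = ⊤ := by
  let T := R₁ ⊗[K] R₂
  have : Algebra.FiniteType K T := Algebra.FiniteType.trans (S := R₁) ‹_› inferInstance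
  have : IsNoetherianRing T := Algebra.FiniteType.isNoetherianRing K T
  have : Nontrivial T := by
    have hincl : Function.Injective (Algebra.TensorProduct.includeLeft : R₁ →ₐ[K] R₁ ⊗[K] R₂) :=
      Algebra.TensorProduct.includeLeft_injective hinj
    exact hincl.nontrivial
  obtain ⟨Φ, hΦ⟩ := TensorProduct.exists_ringHom_tmul (K := K)
    ((Algebra.TensorProduct.includeLeftRingHom : R₁ →+* T).comp φ₁)
    ((Algebra.TensorProduct.includeRight : R₂ →ₐ[K] T).toRingHom.comp φ₂) fun x => by
      simp [h₁, h₂, Algebra.TensorProduct.tmul_one_eq_one_tmul]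
  have hΦ' (a : R₁) (b : R₂) : Φ (a ⊗ₜ b) = φ₁ a ⊗ₜ φ₂ b := by simp [hΦ]
  obtain ⟨m, ⟨hmtop, hmΦ⟩, hmax⟩ := set_has_maximal_iff_noetherian.2 ‹IsNoetherianRing T›
    {I : Ideal T | I ≠ ⊤ ∧ ∀ x ∈ I, Φ x ∈ I}
    ⟨⊥, bot_ne_top, fun x hx => by simp [(Submodule.mem_bot _).1 hx]⟩
  let q := Ideal.Quotient.mkₐ K m
  have hq : Function.Surjective q := Ideal.Quotient.mk_surjective
  let σ : T ⧸ m →+* T ⧸ m := Ideal.quotientMap m Φ hmΦ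
  have hσ (t : T) : σ (q t) = q (Φ t) := Ideal.quotientMap_mk
  refine ⟨T ⧸ m, inferInstance, inferInstance, σ, q.comp Algebra.TensorProduct.includeLeft,
    q.comp Algebra.TensorProduct.includeRight, ⟨?_, fun I hI => ?_⟩, inferInstance, fun r => ?_,
    fun r => ?_, fun U hU₁ hU₂ => ?_⟩
  · have : Nontrivial (T ⧸ m) := Ideal.Quotient.nontrivial_iff.2 hmtop
    exact bot_ne_top
  · by_cases htop : I = ⊤
    · exact Or.inr htop
    · refine Or.inl (eq_bot_iff.2 fun x hx => ?_)
      obtain ⟨t, rfl⟩ := hq x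
      have hle : m ≤ I.comap q := fun y hy => by
        rw [Ideal.mem_comap, show q y = 0 from Ideal.Quotient.eq_zero_iff_mem.2 hy]
        exact I.zero_mem
      have hnot := hmax (I.comap q) ⟨fun h => htop ?_, fun y hy => ?_⟩
      · have : t ∈ m := by
          by_contra ht
          exact hnot (lt_of_le_of_ne hle fun h => ht (h ▸ hx))
        exact Ideal.Quotient.eq_zero_iff_mem.2 this
      · rw [Ideal.eq_top_iff_one] at h ⊢
        rwa [Ideal.mem_comap, map_one] at h
      · rw [Ideal.mem_comap, ← hσ]
        exact hI _ hy
  · exact (hσ _).trans (congrArg q ((hΦ' r 1).trans (by rw [map_one]; rfl)))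
  · exact (hσ _).trans (congrArg q ((hΦ' 1 r).trans (by rw [map_one]; rfl)))
  · rw [eq_top_iff]
    rintro x -
    obtain ⟨t, rfl⟩ := hq x
    induction t using TensorProduct.induction_on with
    | zero => rw [map_zero]; exact U.zero_mem
    | add a b ha hb => rw [map_add]; exact U.add_mem ha hb
    | tmul a b =>
      have : a ⊗ₜ[K] b = (a ⊗ₜ 1 : T) * 1 ⊗ₜ b := by simp
      rw [this, map_mul]
      exact U.mul_mem (hU₁ a) (hU₂ b)

/-- Constants of `S` adjoined to one Picard–Vessiot ring inside `S` give all of `S`, provided `S`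
is generated by this ring and another Picard–Vessiot ring for the same equation. -/
theorem exists_ringEquiv_tmul {K S k l : Type*} {R R' : Type u} [CommRing K] [CommRing R] [CommRing R']
    [CommRing S] [CommRing k] [CommRing l] [Algebra K R] [Algebra K R'] [Algebra K S]
    [Algebra k R] [Algebra k l] [Module.Free k l] {φ : R →+* R} {φ' : R' →+* R'} {σ : S →+* S}
    {n : ℕ} {A : Matrix (Fin n) (Fin n) K} {Y : Matrix (Fin n) (Fin n) R}
    {Y' : Matrix (Fin n) (Fin n) R'} {w : R} {w' : R'} (h : DiffSimple φ)
    (f : R →ₐ[K] S) (f' : R' →ₐ[K] S) (hf : ∀ r, σ (f r) = f (φ r))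
    (hf' : ∀ r, σ (f' r) = f' (φ' r))
    (hS : ∀ T : Subring S, (∀ r, f r ∈ T) → (∀ r, f' r ∈ T) → T = ⊤)
    (hA : IsUnit A.det) (hw : Y.det * w = 1) (hw' : Y'.det * w' = 1)
    (hY : Y.map φ = A.map (algebraMap K R) * Y)
    (hY' : Y'.map φ' = A.map (algebraMap K R') * Y')
    (hg' : Algebra.adjoin K (insert w' {x : R' | ∃ i j, Y' i j = x}) = ⊤)
    (hk : ∀ r, φ r = r → ∃ c : k, algebraMap k R c = r) (j : l →+* S)
    (hj : Function.Injective j) (hjσ : ∀ c, σ (j c) = j c)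
    (hjr : ∀ s, σ s = s → ∃ c, j c = s)
    (hkl : ∀ c : k, j (algebraMap k l c) = f (algebraMap k R c)) :
    ∃ Ψ : R ⊗[k] l ≃+* S, ∀ r c, Ψ (r ⊗ₜ c) = f r * j c := by
  let _ : Algebra R S := f.toRingHom.toAlgebra
  obtain ⟨F, hF⟩ := TensorProduct.exists_ringHom_tmul (K := k) f.toRingHom j fun c => (hkl c).symm
  have hinj : Function.Injective F := h.injective_of_tmul hf hk j hj hjσ hkl F hF
  have hfR (r : R) : f r ∈ F.range := ⟨r ⊗ₜ 1, by rw [hF, map_one, mul_one]; rfl⟩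
  have hconst : constSubring σ ≤ F.range := fun s hs => by
    obtain ⟨c, rfl⟩ := hjr s hs
    exact ⟨1 ⊗ₜ c, by rw [hF, map_one, one_mul]⟩
  have hdet {B : Type u} [CommRing B] [Algebra K B] (g : B →ₐ[K] S) {Z : Matrix (Fin n) (Fin n) B}
      {z : B} (hz : Z.det * z = 1) : (Z.map g).det * g z = 1 := by
    rw [← AlgHom.mapMatrix_apply, ← AlgHom.map_det, ← map_mul, hz, map_one]
  have heq {B : Type u} [CommRing B] [Algebra K B] (g : B →ₐ[K] S) {ψ : B →+* B}
      (hg : ∀ r, σ (g r) = g (ψ r)) {Z : Matrix (Fin n) (Fin n) B}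
      (hZ : Z.map ψ = A.map (algebraMap K B) * Z) :
      (Z.map g).map σ = A.map (algebraMap K S) * Z.map g := by
    have h1 := congrArg (fun M => M.map g) hZ
    simp only [Matrix.map_mul, Matrix.map_map] at h1 ⊢
    have h2 : (g : B → S) ∘ algebraMap K B = algebraMap K S := funext fun x => g.commutes x
    rw [h2] at h1
    rw [← h1]
    congr 1
    exact funext hg
  have hAS : IsUnit (A.map (algebraMap K S)).det := by
    rw [← RingHom.mapMatrix_apply, ← RingHom.map_det]
    exact hA.map _
  obtain ⟨hw'F, hY'F⟩ := solution_mem_of_constSubring_le σ hAS (hdet f hw) (hdet f' hw')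
    (heq f hf hY) (heq f' hf' hY') F.range hconst (fun i j => hfR _) (hfR w)
  have hfR' (r : R') : f' r ∈ F.range := by
    have hr : r ∈ Algebra.adjoin K (insert w' {x : R' | ∃ i j, Y' i j = x}) :=
      hg' ▸ Algebra.mem_top
    induction hr using Algebra.adjoin_induction with
    | mem x hx =>
      rcases hx with rfl | ⟨i, j, rfl⟩
      · exact hw'F
      · exact hY'F i j
    | algebraMap x =>
      rw [f'.commutes, ← f.commutes]
      exact hfR _
    | add x y _ _ hx hy => rw [map_add]; exact F.range.add_mem hx hy
    | mul x y _ _ hx hy => rw [map_mul]; exact F.range.mul_mem hx hy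
  have hsurj : Function.Surjective F := RingHom.range_eq_top.1 (hS _ hfR hfR')
  exact ⟨RingEquiv.ofBijective F ⟨hinj, hsurj⟩, hF⟩

theorem Algebra.FiniteType.of_adjoin_entries {K R : Type*} [CommRing K] [CommRing R] [Algebra K R]
    {n : ℕ} {Y : Matrix (Fin n) (Fin n) R} {w : R}
    (hg : Algebra.adjoin K (insert w {x : R | ∃ i j, Y i j = x}) = ⊤) : Algebra.FiniteType K R := by
  have hfin : (insert w {x : R | ∃ i j, Y i j = x}).Finite := by
    refine Set.Finite.insert _ ((Set.finite_range fun p : Fin n × Fin n => Y p.1 p.2).subset ?_)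
    rintro _ ⟨i, j, rfl⟩
    exact ⟨(i, j), rfl⟩
  exact ⟨⟨hfin.toFinset, by rw [hfin.coe_toFinset, hg]⟩⟩

theorem RingHom.exists_comp_eq_of_range_le {k l S : Type*} [CommRing k] [CommRing l] [CommRing S]
    (j : l →+* S) (hj : Function.Injective j) (g : k →+* S) (hg : ∀ c, ∃ a, j a = g c) :
    ∃ e : k →+* l, ∀ c, j (e c) = g c := by
  let E : l ≃+* j.range := RingEquiv.ofBijective j.rangeRestrict
    ⟨fun _ _ h => hj (congrArg Subtype.val h), j.rangeRestrict_surjective⟩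
  refine ⟨E.symm.toRingHom.comp (g.codRestrict j.range hg), fun c => ?_⟩
  exact congrArg Subtype.val (E.apply_symm_apply (g.codRestrict j.range hg c))

theorem Module.Free.of_isField {k l : Type*} [CommRing k] [CommRing l] [Module k l]
    (h : IsField k) : Module.Free k l :=
  let _ := h.toField
  inferInstance

end PicardVessiot

/-- Uniqueness of Picard–Vessiot rings: two PV rings `R₁`, `R₂` for the same equation
`φ(y) = Ay` over a `φ`-pseudo field `K` become isomorphic after a base change to a
suitable finite field extension `k̃` of `k = K^φ` containing `k₁ = R₁^φ` and `k₂ = R₂^φ`. -/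
theorem pv_ring_unique_up_to_finite_constant_extension
    {K R₁ R₂ : Type u} [CommRing K] [CommRing R₁] [CommRing R₂]
    [Algebra K R₁] [Algebra K R₂] {n : ℕ}
    (φ : K →+* K) (hPF : PseudoField K φ)
    (A : Matrix (Fin n) (Fin n) K) (hA : IsUnit A.det)
    (φ₁ : R₁ →+* R₁) (φ₂ : R₂ →+* R₂)
    (h₁ : ∀ a : K, φ₁ (algebraMap K R₁ a) = algebraMap K R₁ (φ a))
    (h₂ : ∀ a : K, φ₂ (algebraMap K R₂ a) = algebraMap K R₂ (φ a))
    (hs₁ : DiffSimple φ₁) (hs₂ : DiffSimple φ₂)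
    (Y₁ : Matrix (Fin n) (Fin n) R₁) (Y₂ : Matrix (Fin n) (Fin n) R₂)
    (w₁ : R₁) (w₂ : R₂)
    (hw₁ : Y₁.det * w₁ = 1) (hw₂ : Y₂.det * w₂ = 1)
    (hY₁ : Y₁.map ⇑φ₁ = A.map ⇑(algebraMap K R₁) * Y₁)
    (hY₂ : Y₂.map ⇑φ₂ = A.map ⇑(algebraMap K R₂) * Y₂)
    (hg₁ : Algebra.adjoin K (insert w₁ {x : R₁ | ∃ i j, Y₁ i j = x}) = ⊤)
    (hg₂ : Algebra.adjoin K (insert w₂ {x : R₂ | ∃ i j, Y₂ i j = x}) = ⊤) :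
    ∃ (k' : Type u) (_ : Field k')
      (e : ↥(constSubring φ) →+* k')
      (e₁ : ↥(constSubring φ₁) →+* k') (e₂ : ↥(constSubring φ₂) →+* k'),
      -- `k'` is a finite extension of `k = K^φ`
      Function.Injective e ∧
      (@Module.Finite ↥(constSubring φ) k' _ _ (Module.compHom k' e)) ∧
      -- `e₁`, `e₂` are `k`-algebra embeddings of `k₁`, `k₂` into `k'`
      Function.Injective e₁ ∧ Function.Injective e₂ ∧
      (∀ (a : K) (ha : φ a = a),
        e₁ ⟨algebraMap K R₁ a, (h₁ a).trans (congrArg (algebraMap K R₁) ha)⟩ = e ⟨a, ha⟩) ∧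
      (∀ (a : K) (ha : φ a = a),
        e₂ ⟨algebraMap K R₂ a, (h₂ a).trans (congrArg (algebraMap K R₂) ha)⟩ = e ⟨a, ha⟩) ∧
      -- the base-changed PV rings are isomorphic compatibly with everything
      (letI : Algebra ↥(constSubring φ₁) k' := e₁.toAlgebra
       letI : Algebra ↥(constSubring φ₂) k' := e₂.toAlgebra
       ∃ (ψ : (R₁ ⊗[↥(constSubring φ₁)] k') ≃+* (R₂ ⊗[↥(constSubring φ₂)] k'))
         (Φ₁' : (R₁ ⊗[↥(constSubring φ₁)] k') →+* (R₁ ⊗[↥(constSubring φ₁)] k'))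
         (Φ₂' : (R₂ ⊗[↥(constSubring φ₂)] k') →+* (R₂ ⊗[↥(constSubring φ₂)] k')),
         -- `Φᵢ' = φᵢ ⊗ id`
         (∀ (r : R₁) (c : k'), Φ₁' (r ⊗ₜ c) = φ₁ r ⊗ₜ c) ∧
         (∀ (r : R₂) (c : k'), Φ₂' (r ⊗ₜ c) = φ₂ r ⊗ₜ c) ∧
         -- `ψ` commutes with the endomorphisms
         (∀ t, ψ (Φ₁' t) = Φ₂' (ψ t)) ∧
         -- `ψ` is compatible with the `K ⊗_k k'`-algebra structures
         (∀ (x : K) (c : k'), ψ (algebraMap K R₁ x ⊗ₜ c) = algebraMap K R₂ x ⊗ₜ c)) := by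
  have := hPF.2.1
  have := hPF.1.nontrivial
  have := hPF.1.isReduced
  have : IsArtinianRing K := isArtinianRing_of_forall_nonZeroDivisors_isUnit hPF.2.2
  have : IsSemisimpleRing K := IsArtinianRing.isSemisimpleRing_of_isReduced K
  have := Module.projective_of_isSemisimpleRing K R₁
  have := hs₁.nontrivial
  have := hs₂.nontrivial
  have := Algebra.FiniteType.of_adjoin_entries hg₁
  have := Algebra.FiniteType.of_adjoin_entries hg₂
  obtain ⟨S, _, _, σ, f₁, f₂, hS, _, hf₁, hf₂, hgen⟩ :=
    exists_diffSimple_of_flat (hPF.1.injective (algebraMap K R₂) fun a => (h₂ a).symm) φ₁ φ₂ h₁ h₂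
  have := hS.nontrivial
  have hσK (a : K) : σ (algebraMap K S a) = algebraMap K S (φ a) := by
    rw [← f₁.commutes, hf₁, h₁, f₁.commutes]
  obtain ⟨k', _, j, hj, hjσ, hjr⟩ : ∃ (l : Type u) (_ : Field l) (j : l →+* S),
      Function.Injective j ∧ (∀ c, σ (j c) = j c) ∧ ∀ s, σ s = s → ∃ c, j c = s :=
    ⟨constSubring σ, hS.isField_constSubring.toField, (constSubring σ).subtype,
      Subtype.val_injective, fun c => c.2, fun s hs => ⟨⟨s, hs⟩, rfl⟩⟩
  have hlift {R : Type u} [CommRing R] {ψ : R →+* R} (f : R →+* S) (hf : ∀ r, σ (f r) = f (ψ r)) :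
      ∃ e : constSubring ψ →+* k', ∀ c, j (e c) = f c :=
    RingHom.exists_comp_eq_of_range_le j hj (f.comp (constSubring ψ).subtype) fun c =>
      hjr _ ((hf _).trans (congrArg f c.2))
  obtain ⟨e, he⟩ := hlift (algebraMap K S) hσK
  obtain ⟨e₁, he₁⟩ := hlift f₁.toRingHom hf₁
  obtain ⟨e₂, he₂⟩ := hlift f₂.toRingHom hf₂
  have hinj {R : Type u} [CommRing R] {ψ : R →+* R} (hψ : DiffSimple ψ)
      (e : constSubring ψ →+* k') : Function.Injective e :=
    let _ := hψ.isField_constSubring.toField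
    e.injective
  refine ⟨k', inferInstance, e, e₁, e₂, hinj hPF.1 e, ?_, hinj hs₁ e₁, hinj hs₂ e₂,
    fun a ha => hj ?_, fun a ha => hj ?_, ?_⟩
  · let _ : Field (constSubring φ) := hPF.1.isField_constSubring.toField
    let _ : Algebra (constSubring φ) k' := e.toAlgebra
    let _ : Algebra k' S := j.toAlgebra
    exact hPF.1.finite_of_finiteType (k := constSubring φ) (l := k') hS hσK
      (fun r hr => ⟨⟨r, hr⟩, rfl⟩) hjσ he
  · rw [he, he₁]
    exact f₁.commutes a
  · rw [he, he₂]
    exact f₂.commutes a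
  · let _ : Algebra (constSubring φ₁) k' := e₁.toAlgebra
    let _ : Algebra (constSubring φ₂) k' := e₂.toAlgebra
    have : Module.Free (constSubring φ₁) k' := .of_isField hs₁.isField_constSubring
    have : Module.Free (constSubring φ₂) k' := .of_isField hs₂.isField_constSubring
    obtain ⟨Ψ₁, hΨ₁⟩ := exists_ringEquiv_tmul (k := constSubring φ₁) hs₁ f₁ f₂ hf₁ hf₂ hgen hA
      hw₁ hw₂ hY₁ hY₂ hg₂ (fun r hr => ⟨⟨r, hr⟩, rfl⟩) j hj hjσ hjr he₁
    obtain ⟨Ψ₂, hΨ₂⟩ := exists_ringEquiv_tmul (k := constSubring φ₂) hs₂ f₂ f₁ hf₂ hf₁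
      (fun T h2 h1 => hgen T h1 h2) hA hw₂ hw₁ hY₂ hY₁ hg₁ (fun r hr => ⟨⟨r, hr⟩, rfl⟩) j hj hjσ
      hjr he₂
    obtain ⟨Φ₁, hΦ₁⟩ := TensorProduct.exists_endomorphism_tmul (k := constSubring φ₁) (l := k') φ₁
      fun c => c.2
    obtain ⟨Φ₂, hΦ₂⟩ := TensorProduct.exists_endomorphism_tmul (k := constSubring φ₂) (l := k') φ₂
      fun c => c.2
    have hc₁ (t : R₁ ⊗[constSubring φ₁] k') : Ψ₁ (Φ₁ t) = σ (Ψ₁ t) := by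
      induction t with
      | zero => simp
      | add a b ha hb => rw [map_add, map_add, map_add, map_add, ha, hb]
      | tmul r c => rw [hΦ₁, hΨ₁, hΨ₁, map_mul, hf₁, hjσ]
    have hc₂ (t : R₂ ⊗[constSubring φ₂] k') : Ψ₂ (Φ₂ t) = σ (Ψ₂ t) := by
      induction t with
      | zero => simp
      | add a b ha hb => rw [map_add, map_add, map_add, map_add, ha, hb]
      | tmul r c => rw [hΦ₂, hΨ₂, hΨ₂, map_mul, hf₂, hjσ]
    refine ⟨Ψ₁.trans Ψ₂.symm, Φ₁, Φ₂, hΦ₁, hΦ₂, fun t => Ψ₂.injective ?_, fun x c =>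
      Ψ₂.injective ?_⟩
    · simp [hc₁, hc₂]
    · simp [hΨ₁, hΨ₂]
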